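/- Let A₁,…,Aₙ be finite subsets of a field F with |Aᵢ| ≥ i for all i = 1,…,n. Then |{ x₁ + ⋯ + xₙ : xᵢ ∈ Aᵢ, xᵢ ≠ x_j for i ≠ j }| ≥ min{ p(F), 1 + Σ_{i=1}^n min_{i ≤ j ≤ n} (|A_j| − j) }. -/

import Mathlib

/-!
The Alon–Nathanson–Ruzsa polynomial method. If `E` contains every sum of distinct representatives
and `#E ≤ M`, then `∏ e ∈ E, (∑ Xᵢ - e)`, padded to degree `M` and multiplied by the Vandermonde
polynomial, vanishes on `∏ Aᵢ`. Its coefficient at a top-degree monomial `∏ Xᵢ ^ cᵢ` is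
`M! / ∏ cᵢ!` times the Vandermonde determinant of the `cᵢ`, so the combinatorial Nullstellensatz is
contradicted as soon as `cᵢ < #Aᵢ` and the `cᵢ` are distinct in the ring.

To reach `K + 1 ≤ 1 + ∑ mᵢ` sums, where `mᵢ = min_{j ≥ i} (#Aⱼ - j)` (1-based), either `m₂, …, mₙ`
already add up to at least `K`, and one fixes `x₁` and removes it from the other sets, or lowering
`m₁` makes the total exactly `K` with all `mᵢ` positive. In the second case the exponents
`i - 1 + mᵢ` are distinct and at most `K`, hence distinct in the ring when `K! ≠ 0`.
-/

open Finset
open scoped Nat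

lemma natCast_injOn_Iic_of_factorial_ne_zero {S : Type*} [NonAssocRing S] {M : ℕ}
    (hM : (M ! : S) ≠ 0) : Set.InjOn (Nat.cast : ℕ → S) (Set.Iic M) := by
  intro a ha b hb hab
  wlog hlt : a < b generalizing a b
  · by_contra hne
    exact hne (this hb ha hab.symm (by omega)).symm
  have hcast : ((b - a : ℕ) : S) = 0 := by rw [Nat.cast_sub hlt.le, hab, sub_self]
  obtain ⟨q, hq⟩ := Nat.dvd_factorial (Nat.sub_pos_of_lt hlt) ((Nat.sub_le b a).trans hb)
  exact absurd (by rw [hq, Nat.cast_mul, hcast, zero_mul]) hM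

lemma natCast_factorial_ne_zero_of_lt_ringChar {S : Type*} [NonAssocSemiring S]
    [NoZeroDivisors S] [Nontrivial S] {K : ℕ}
    (hK : (K : ℕ∞) < if ringChar S = 0 then ⊤ else (ringChar S : ℕ∞)) :
    (K ! : S) ≠ 0 := by
  rw [Ne, ringChar.spec]
  split_ifs at hK with h0
  · rw [h0, zero_dvd_iff]
    exact K.factorial_ne_zero
  · have prime : (ringChar S).Prime := (CharP.char_is_prime_or_zero S _).resolve_right h0
    rw [prime.dvd_factorial, not_le]
    exact Nat.cast_lt.1 hK

lemma add_le_sum_of_pos {n : ℕ} {m : Fin n → ℕ} (hm : ∀ i, 0 < m i) (i : Fin n) :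
    i + m i ≤ ∑ j, m j := by
  have hcard : #(univ.erase i) ≤ ∑ j ∈ univ.erase i, m j := by
    simpa using card_nsmul_le_sum (univ.erase i) m 1 fun j _ ↦ hm j
  rw [card_erase_of_mem (mem_univ i), card_univ, Fintype.card_fin] at hcard
  rw [← sum_erase_add _ _ (mem_univ i)]
  omega

lemma monotone_finCons {n : ℕ} {α : Type*} [Preorder α] {a : α} {f : Fin n → α}
    (ha : ∀ i, a ≤ f i) (hf : Monotone f) : Monotone (Fin.cons a f : Fin (n + 1) → α) := by
  intro i j hij
  induction i using Fin.cases with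
  | zero => exact Fin.cases le_rfl ha j
  | succ i =>
    obtain ⟨j, rfl⟩ := Fin.exists_succ_eq.2 (i.succ_pos.trans_le hij).ne'
    exact hf (Fin.succ_le_succ_iff.1 hij)

section TailInf

/-- The infimum of `a j` over `j ≥ i`, which is attained since `ℕ` is well-ordered. For
`a j = |Aⱼ| - j` (1-based) it is the summand `min_{i ≤ j ≤ n} (|Aⱼ| - j)` of the sumset bound. -/
noncomputable def tailInf {ι : Type*} [LE ι] (a : ι → ℕ) (i : ι) : ℕ :=
  sInf {c | ∃ j, i ≤ j ∧ c = a j}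

variable {ι : Type*} [Preorder ι] (a : ι → ℕ)

lemma tailInf_le (i : ι) : tailInf a i ≤ a i :=
  Nat.sInf_le ⟨i, le_rfl, rfl⟩

lemma monotone_tailInf : Monotone (tailInf a) := fun _ _ hij ↦
  csInf_le_csInf' ⟨_, _, le_rfl, rfl⟩ fun _ ⟨k, hk, hc⟩ ↦ ⟨k, hij.trans hk, hc⟩

end TailInf

section Coefficients

open MvPolynomial

variable {R σ : Type*} [CommSemiring R]

lemma totalDegree_aeval_le (p : MvPolynomial σ R) (g : Polynomial R) :
    (Polynomial.aeval p g).totalDegree ≤ g.natDegree * p.totalDegree := by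
  rw [Polynomial.aeval_eq_sum_range]
  refine totalDegree_finsetSum_le fun k hk ↦ ?_
  calc (g.coeff k • p ^ k).totalDegree
      ≤ (p ^ k).totalDegree := totalDegree_smul_le _ _
    _ ≤ k * p.totalDegree := totalDegree_pow _ _
    _ ≤ g.natDegree * p.totalDegree := by
        gcongr
        exact Nat.lt_succ_iff.1 (mem_range.1 hk)

lemma coeff_aeval_mul_of_monic {p h : MvPolynomial σ R} {g : Polynomial R} {c : σ →₀ ℕ}
    (hg : g.Monic) (hp : p.totalDegree ≤ 1) (hc : g.natDegree + h.totalDegree ≤ c.degree) :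
    coeff c (Polynomial.aeval p g * h) = coeff c (p ^ g.natDegree * h) := by
  have lower_term (k : ℕ) (hk : k < g.natDegree) : coeff c (g.coeff k • p ^ k * h) = 0 := by
    refine coeff_eq_zero_of_totalDegree_lt (lt_of_lt_of_le ?_ hc)
    calc (g.coeff k • p ^ k * h).totalDegree
        ≤ (g.coeff k • p ^ k).totalDegree + h.totalDegree := totalDegree_mul _ _
      _ ≤ (p ^ k).totalDegree + h.totalDegree := by gcongr; exact totalDegree_smul_le _ _
      _ ≤ k * p.totalDegree + h.totalDegree := by gcongr; exact totalDegree_pow _ _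
      _ ≤ k + h.totalDegree := by gcongr; exact mul_le_of_le_one_right k.zero_le hp
      _ < g.natDegree + h.totalDegree := by gcongr
  rw [Polynomial.aeval_eq_sum_range, sum_range_succ, hg.coeff_natDegree, one_smul, add_mul,
    coeff_add, sum_mul, coeff_sum, sum_eq_zero fun k hk ↦ lower_term k (mem_range.1 hk), zero_add]

variable [Fintype σ]

lemma totalDegree_sum_X_le : (∑ i, X i : MvPolynomial σ R).totalDegree ≤ 1 :=
  totalDegree_finsetSum_le fun i _ ↦ (isHomogeneous_X R i).totalDegree_le

lemma coeff_sum_X_pow_mul_prod_factorial {c : σ →₀ ℕ} {M : ℕ} (hc : ∑ i, c i = M) :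
    coeff c ((∑ i, X i : MvPolynomial σ R) ^ M) * ∏ i, ((c i)! : R) = M ! := by
  have hsum : c.sum (fun _ m ↦ m) = M := by rw [Finsupp.sum_fintype _ _ fun _ ↦ rfl, hc]
  rw [coeff_sum_X_pow_of_fintype, if_pos hsum,
    Finsupp.multinomial_eq_of_support_subset (subset_univ _), mul_comm, ← hc]
  exact_mod_cast congrArg (Nat.cast (R := R)) (Nat.multinomial_spec univ c)

lemma coeff_sum_X_pow_mul_prod_X_pow {c : σ →₀ ℕ} {M : ℕ} {k : σ → ℕ}
    (hc : ∑ i, c i = M + ∑ i, k i) :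
    coeff c ((∑ i, X i : MvPolynomial σ R) ^ M * ∏ i, X i ^ k i) * ∏ i, ((c i)! : R) =
      M ! * ∏ i, ((c i).descFactorial (k i) : R) := by
  rw [prod_X_pow, coeff_mul_monomial', mul_one]
  set k' : σ →₀ ℕ := Finsupp.indicator univ fun i _ ↦ k i
  have hk' (i : σ) : k' i = k i := Finsupp.indicator_of_mem (mem_univ i) _
  split_ifs with hle
  · have hle' (i : σ) : k i ≤ c i := hk' i ▸ hle i
    have hsub : ∑ i, (c - k') i = M := by
      simp only [Finsupp.tsub_apply, hk', sum_tsub_distrib univ fun i _ ↦ hle' i]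
      omega
    rw [← coeff_sum_X_pow_mul_prod_factorial hsub, mul_assoc, ← prod_mul_distrib]
    congr! 2 with i
    rw [Finsupp.tsub_apply, hk']
    exact_mod_cast congrArg (Nat.cast (R := R)) (Nat.factorial_mul_descFactorial (hle' i)).symm
  · obtain ⟨i, hi⟩ : ∃ i, c i < k i := by
      simpa only [Finsupp.le_def, hk', not_forall, not_le] using hle
    have hzero : ((c i).descFactorial (k i) : R) = 0 := by
      rw [Nat.descFactorial_of_lt hi, Nat.cast_zero]
    rw [zero_mul, prod_eq_zero (mem_univ i) hzero, mul_zero]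

end Coefficients

section VandermondePolynomial

open MvPolynomial

variable {R : Type*} [CommRing R] {n : ℕ}

variable (R n) in
/-- The Vandermonde polynomial `∏ i < j, (Xⱼ - Xᵢ)`, whose nonvanishing at a point of a domain
says that the coordinates are distinct. -/
noncomputable def vandermondePolynomial : MvPolynomial (Fin n) R :=
  (Matrix.vandermonde X).det

lemma vandermondePolynomial_eq_sum :
    vandermondePolynomial R n =
      ∑ s : Equiv.Perm (Fin n), C ((Equiv.Perm.sign s : ℤ) : R) * ∏ i, X i ^ (s i : ℕ) := by
  rw [vandermondePolynomial, ← Matrix.det_transpose, Matrix.det_apply']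
  simp only [Matrix.transpose_apply, Matrix.vandermonde_apply, map_intCast]

lemma totalDegree_vandermondePolynomial_le :
    (vandermondePolynomial R n).totalDegree ≤ ∑ i : Fin n, (i : ℕ) := by
  rw [vandermondePolynomial_eq_sum]
  refine totalDegree_finsetSum_le fun s _ ↦ IsHomogeneous.totalDegree_le (.C_mul ?_ _)
  rw [← Equiv.sum_comp s fun i ↦ (i : ℕ)]
  exact .prod _ _ _ fun i _ ↦ isHomogeneous_X_pow i _

lemma eval_vandermondePolynomial (x : Fin n → R) :
    eval x (vandermondePolynomial R n) = (Matrix.vandermonde x).det := by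
  rw [vandermondePolynomial, RingHom.map_det]
  congr 1
  ext i j
  simp [Matrix.vandermonde_apply]

lemma det_vandermonde_natCast_eq_sum_descFactorial (c : Fin n → ℕ) :
    (Matrix.vandermonde fun i ↦ (c i : R)).det =
      ∑ s : Equiv.Perm (Fin n), ((Equiv.Perm.sign s : ℤ) : R) *
        ∏ i, ((c i).descFactorial (s i) : R) := by
  -- `descPochhammer_natDegree` needs a domain, so the identity is mapped from `ℤ` to `R`.
  have over_int : (Matrix.vandermonde fun i ↦ (c i : ℤ)).det =
      ∑ s : Equiv.Perm (Fin n), (Equiv.Perm.sign s : ℤ) *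
        ∏ i, ((c i).descFactorial (s i) : ℤ) := by
    rw [Matrix.det_eval_matrixOfPolynomials_eq_det_vandermonde _
      (fun i : Fin n ↦ descPochhammer ℤ i) (fun i ↦ descPochhammer_natDegree ℤ i)
      (fun i ↦ monic_descPochhammer ℤ i), ← Matrix.det_transpose, Matrix.det_apply']
    simp only [Matrix.transpose_apply, Matrix.of_apply, descPochhammer_eval_eq_descFactorial,
      Int.cast_id]
  have hmap : (Matrix.vandermonde fun i ↦ (c i : R)).det =
      ((Matrix.vandermonde fun i ↦ (c i : ℤ)).det : R) := by
    rw [Int.cast_det]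
    congr 1
    ext i j
    simp [Matrix.vandermonde_apply]
  rw [hmap, over_int]
  push_cast
  rfl

lemma coeff_sum_X_pow_mul_vandermondePolynomial {c : Fin n →₀ ℕ} {M : ℕ}
    (hc : ∑ i, c i = M + ∑ i : Fin n, (i : ℕ)) :
    coeff c ((∑ i, X i) ^ M * vandermondePolynomial R n) * ∏ i, ((c i)! : R) =
      M ! * (Matrix.vandermonde fun i ↦ (c i : R)).det := by
  rw [vandermondePolynomial_eq_sum, det_vandermonde_natCast_eq_sum_descFactorial, mul_sum,
    coeff_sum, sum_mul, mul_sum]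
  refine sum_congr rfl fun s _ ↦ ?_
  have hs : ∑ i, c i = M + ∑ i, (s i : ℕ) := by rw [hc, Equiv.sum_comp s fun i ↦ (i : ℕ)]
  rw [mul_left_comm, coeff_C_mul, mul_assoc, coeff_sum_X_pow_mul_prod_X_pow hs, mul_left_comm]

end VandermondePolynomial

section PolynomialMethod

open MvPolynomial

lemma eval_aeval {R σ : Type*} [CommSemiring R] (x : σ → R) (p : MvPolynomial σ R)
    (g : Polynomial R) : eval x (Polynomial.aeval p g) = g.eval (eval x p) := by
  rw [← aeval_eq_eval, ← Polynomial.aeval_algHom_apply, Polynomial.coe_aeval_eq_eval]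

lemma exists_monic_natDegree_eq_forall_eval_eq_zero {R : Type*} [CommRing R] [Nontrivial R]
    {E : Finset R} {M : ℕ} (hM : #E ≤ M) :
    ∃ g : Polynomial R, g.Monic ∧ g.natDegree = M ∧ ∀ e ∈ E, g.eval e = 0 := by
  let p : Polynomial R := ∏ e ∈ E, (Polynomial.X - Polynomial.C e)
  have monic_p : p.Monic :=
    Polynomial.monic_prod_of_monic _ _ fun e _ ↦ Polynomial.monic_X_sub_C e
  have natDegree_p : p.natDegree = #E := Polynomial.natDegree_finsetProd_X_sub_C_eq_card E id
  have eval_p (e : R) (he : e ∈ E) : p.eval e = 0 := by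
    rw [Polynomial.eval_prod, prod_eq_zero he]
    rw [Polynomial.eval_sub, Polynomial.eval_X, Polynomial.eval_C, sub_self]
  refine ⟨p * Polynomial.X ^ (M - #E), monic_p.mul (Polynomial.monic_X_pow _), ?_, fun e he ↦ ?_⟩
  · rw [monic_p.natDegree_mul (Polynomial.monic_X_pow _), natDegree_p, Polynomial.natDegree_X_pow,
      Nat.add_sub_cancel' hM]
  · rw [Polynomial.eval_mul, eval_p e he, zero_mul]

theorem lt_card_of_coeff_sum_X_pow_mul_ne_zero {R σ : Type*} [CommRing R] [IsDomain R]
    [Fintype σ] {h : MvPolynomial σ R} {M : ℕ} {c : σ →₀ ℕ} {A : σ → Finset R} {E : Finset R}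
    (hcoeff : coeff c ((∑ i, X i) ^ M * h) ≠ 0) (hdeg : M + h.totalDegree ≤ c.degree)
    (hA : ∀ i, c i < #(A i))
    (hE : ∀ x : σ → R, (∀ i, x i ∈ A i) → eval x h ≠ 0 → ∑ i, x i ∈ E) : M < #E := by
  by_contra! hM
  obtain ⟨g, monic, natDegree, eval_g⟩ := exists_monic_natDegree_eq_forall_eval_eq_zero hM
  let f : MvPolynomial σ R := Polynomial.aeval (∑ i, X i) g * h
  have coeff_f : coeff c f ≠ 0 := by
    rwa [coeff_aeval_mul_of_monic monic totalDegree_sum_X_le (natDegree ▸ hdeg), natDegree]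
  have totalDegree_f : f.totalDegree = c.degree := by
    refine le_antisymm ?_ (le_totalDegree (mem_support_iff.2 coeff_f))
    calc f.totalDegree
        ≤ (Polynomial.aeval (∑ i, X i : MvPolynomial σ R) g).totalDegree + h.totalDegree :=
          totalDegree_mul _ _
      _ ≤ M * 1 + h.totalDegree := by
          rw [← natDegree]
          gcongr
          exact (totalDegree_aeval_le _ _).trans (by gcongr; exact totalDegree_sum_X_le)
      _ ≤ c.degree := by rwa [mul_one]
  obtain ⟨x, hxA, hx⟩ :=
    combinatorial_nullstellensatz_exists_eval_nonzero f c coeff_f totalDegree_f A hA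
  have eval_f : eval x f = g.eval (∑ i, x i) * eval x h := by
    rw [map_mul, eval_aeval, map_sum]
    simp only [eval_X]
  rw [eval_f] at hx
  exact left_ne_zero_of_mul hx (eval_g _ (hE x hxA (right_ne_zero_of_mul hx)))

end PolynomialMethod

section RestrictedSumset

/-- The restricted sumset `{∑ xᵢ : xᵢ ∈ Aᵢ, xᵢ ≠ xⱼ for i ≠ j}`. -/
noncomputable def restrictedSumset {ι G : Type*} [Fintype ι] [AddCommMonoid G]
    (A : ι → Finset G) : Finset G := by
  classical exact {x ∈ Fintype.piFinset A | Function.Injective x}.image fun x ↦ ∑ i, x i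

lemma mem_restrictedSumset {ι G : Type*} [Fintype ι] [AddCommMonoid G] {A : ι → Finset G} {y : G} :
    y ∈ restrictedSumset A ↔
      ∃ x : ι → G, (∀ i, x i ∈ A i) ∧ Function.Injective x ∧ ∑ i, x i = y := by
  simp [restrictedSumset, and_assoc]

lemma card_restrictedSumset_erase_le {G : Type*} [AddCommMonoid G] [IsLeftCancelAdd G]
    [DecidableEq G] {n : ℕ} {A : Fin (n + 1) → Finset G} {a : G} (ha : a ∈ A 0) :
    #(restrictedSumset fun i : Fin n ↦ (A i.succ).erase a) ≤ #(restrictedSumset A) := by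
  refine card_le_card_of_injOn (a + ·) ?_ (add_right_injective a).injOn
  intro y hy
  obtain ⟨x, hxA, hx, rfl⟩ := mem_restrictedSumset.1 hy
  refine mem_restrictedSumset.2 ⟨Fin.cons a x, Fin.cases ha fun i ↦ mem_of_mem_erase (hxA i),
    Fin.cons_injective_iff.2 ⟨?_, hx⟩, Fin.sum_cons a x⟩
  rintro ⟨i, rfl⟩
  exact notMem_erase _ _ (hxA i)

end RestrictedSumset

section SumsetBounds

variable {R : Type*} [CommRing R] [IsDomain R] {n : ℕ}

theorem lt_card_restrictedSumset_of_injective {A : Fin n → Finset R} {c : Fin n → ℕ} {M : ℕ}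
    (hsum : ∑ i, c i = M + ∑ i : Fin n, (i : ℕ)) (hM : (M ! : R) ≠ 0)
    (hc : Function.Injective fun i ↦ (c i : R)) (hA : ∀ i, c i < #(A i)) :
    M < #(restrictedSumset A) := by
  let c' : Fin n →₀ ℕ := Finsupp.equivFunOnFinite.symm c
  refine lt_card_of_coeff_sum_X_pow_mul_ne_zero (h := vandermondePolynomial R n) (c := c') ?_ ?_ hA
    fun x hxA hx ↦ ?_
  · refine left_ne_zero_of_mul (b := ∏ i, ((c' i)! : R)) ?_
    rw [coeff_sum_X_pow_mul_vandermondePolynomial hsum]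
    exact mul_ne_zero hM (Matrix.det_vandermonde_ne_zero_iff.2 hc)
  · rw [Finsupp.degree_eq_sum]
    exact (add_le_add_right totalDegree_vandermondePolynomial_le M).trans_eq hsum.symm
  · rw [eval_vandermondePolynomial, Matrix.det_vandermonde_ne_zero_iff] at hx
    exact mem_restrictedSumset.2 ⟨x, hxA, hx, rfl⟩

lemma lt_card_restrictedSumset_of_pos {A : Fin n → Finset R} {m : Fin n → ℕ}
    (hm : Monotone m) (hpos : ∀ i, 0 < m i) (hM : ((∑ i, m i)! : R) ≠ 0)
    (hA : ∀ i, i + m i < #(A i)) : ∑ i, m i < #(restrictedSumset A) := by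
  have hmono : StrictMono fun i : Fin n ↦ i + m i :=
    (Fin.val_strictMono (n := n)).add_monotone hm
  refine lt_card_restrictedSumset_of_injective (by rw [sum_add_distrib, add_comm]) hM ?_ hA
  intro i j hij
  exact hmono.injective (natCast_injOn_Iic_of_factorial_ne_zero hM
    (add_le_sum_of_pos hpos i) (add_le_sum_of_pos hpos j) hij)

lemma lt_card_restrictedSumset_of_sum_succ_lt {A : Fin (n + 1) → Finset R} {m : Fin (n + 1) → ℕ}
    {K : ℕ} (hm : Monotone m) (hlt : ∑ i : Fin n, m i.succ < K) (hK : K ≤ ∑ i, m i)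
    (hK' : (K ! : R) ≠ 0) (hA : ∀ i, i + m i < #(A i)) : K < #(restrictedSumset A) := by
  rw [Fin.sum_univ_succ] at hK
  obtain ⟨r, rfl⟩ := Nat.exists_eq_add_of_lt hlt
  have r_lt (i : Fin (n + 1)) : r < m i := by
    have := hm i.zero_le
    omega
  let m' : Fin (n + 1) → ℕ := Fin.cons (r + 1) fun i ↦ m i.succ
  have sum_m' : ∑ i, m' i = ∑ i : Fin n, m i.succ + r + 1 := by
    rw [Fin.sum_cons]
    ring
  have m'_le (i : Fin (n + 1)) : m' i ≤ m i := Fin.cases (r_lt 0) (fun _ ↦ le_rfl) i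
  have m'_pos (i : Fin (n + 1)) : 0 < m' i :=
    Fin.cases r.succ_pos (fun i ↦ r.zero_le.trans_lt (r_lt i.succ)) i
  have m'_mono : Monotone m' :=
    monotone_finCons (fun i ↦ r_lt i.succ) (hm.comp Fin.strictMono_succ.monotone)
  rw [← sum_m'] at hK' ⊢
  exact lt_card_restrictedSumset_of_pos m'_mono m'_pos hK' fun i ↦
    (Nat.add_le_add_left (m'_le i) i).trans_lt (hA i)

theorem lt_card_restrictedSumset_of_monotone {A : Fin n → Finset R} {m : Fin n → ℕ} {K : ℕ}
    (hm : Monotone m) (hK : K ≤ ∑ i, m i) (hK' : (K ! : R) ≠ 0) (hA : ∀ i, i + m i < #(A i)) :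
    K < #(restrictedSumset A) := by
  classical
  induction n with
  | zero =>
    rw [show K = 0 by simpa using hK]
    exact card_pos.2 ⟨0, mem_restrictedSumset.2 ⟨0, by simp, Function.injective_of_subsingleton _,
      by simp⟩⟩
  | succ n ih =>
    rw [Fin.sum_univ_succ] at hK
    by_cases htail : K ≤ ∑ i : Fin n, m i.succ
    · obtain ⟨a, ha⟩ : (A 0).Nonempty := card_pos.1 (Nat.zero_lt_of_lt (hA 0))
      have card_gt (i : Fin n) : i + m i.succ < #((A i.succ).erase a) := by
        have card_succ : i + 1 + m i.succ < #(A i.succ) := hA i.succ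
        have card_erase : #(A i.succ) - 1 ≤ #((A i.succ).erase a) := pred_card_le_card_erase
        omega
      exact (ih (hm.comp Fin.strictMono_succ.monotone) htail card_gt).trans_le
        (card_restrictedSumset_erase_le ha)
    · exact lt_card_restrictedSumset_of_sum_succ_lt hm (not_le.1 htail)
        (by rwa [Fin.sum_univ_succ]) hK' hA

end SumsetBounds

theorem stmt_8_general {R : Type*} [CommRing R] [IsDomain R] (n : ℕ)
    (A : Fin n → Finset R) (hA : ∀ i : Fin n, i.1 + 1 ≤ (A i).card) :
    min (if ringChar R = 0 then (⊤ : ℕ∞) else (ringChar R : ℕ∞))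
        ((1 + ∑ i : Fin n,
            sInf {c : ℕ | ∃ j : Fin n, i ≤ j ∧ c = (A j).card - (j.1 + 1)} : ℕ)) ≤
      ({y : R | ∃ x : Fin n → R, (∀ i, x i ∈ A i) ∧ Function.Injective x ∧
          (∑ i, x i) = y}.ncard : ℕ∞) := by
  let m : Fin n → ℕ := tailInf fun j ↦ #(A j) - (j.1 + 1)
  have hm (i : Fin n) : i + m i < #(A i) := by
    have : m i ≤ #(A i) - (i.1 + 1) := tailInf_le _ i
    have := hA i
    omega
  have sums_eq : {y : R | ∃ x : Fin n → R, (∀ i, x i ∈ A i) ∧ Function.Injective x ∧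
      (∑ i, x i) = y} = restrictedSumset A := Set.ext fun _ ↦ mem_restrictedSumset.symm
  rw [sums_eq, Set.ncard_coe_finset]
  by_contra! hlt
  obtain ⟨lt_char, lt_sum⟩ := lt_min_iff.1 hlt
  have le_sum : #(restrictedSumset A) ≤ ∑ i, m i :=
    Nat.lt_one_add_iff.1 (Nat.cast_lt.1 lt_sum)
  exact lt_irrefl _ (lt_card_restrictedSumset_of_monotone (monotone_tailInf _) le_sum
    (natCast_factorial_ne_zero_of_lt_ringChar lt_char) hm)

theorem stmt_8 {F : Type*} [Field F] (n : ℕ)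
    (A : Fin n → Finset F) (hA : ∀ i : Fin n, i.1 + 1 ≤ (A i).card) :
    min (if ringChar F = 0 then (⊤ : ℕ∞) else (ringChar F : ℕ∞))
        ((1 + ∑ i : Fin n,
            sInf {c : ℕ | ∃ j : Fin n, i ≤ j ∧ c = (A j).card - (j.1 + 1)} : ℕ)) ≤
      ({y : F | ∃ x : Fin n → F, (∀ i, x i ∈ A i) ∧ Function.Injective x ∧
          (∑ i, x i) = y}.ncard : ℕ∞) := by
  exact stmt_8_general n A hA
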